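/- arXiv:2312.00366 — 4 statements merged into one kernel-verified Lean document; each statement's English description precedes it below -/
import Mathlib

section
/- Let (Ω, μ) and (Δ, ν) be measure spaces, let X be a Banach space over 𝕜 (= ℝ or ℂ), let {f_α}_{α∈Ω} and {g_β}_{β∈Δ} be families of (not necessarily bounded) linear functionals on X, and let {τ_α}_{α∈Ω} ⊆ X and {ω_β}_{β∈Δ} ⊆ X. Fix x ∈ X and positive real constants A, B with |f_α(ω_β)| ≤ A and |g_β(τ_α)| ≤ B for all α ∈ Ω, β ∈ Δ. Assume: (i) the map α ↦ f_α(x) is integrable on (Ω, μ) with ∫_Ω |f_α(x)| dμ(α) > 0, and the map β ↦ g_β(x) is integrable on (Δ, ν) with ∫_Δ |g_β(x)| dν(β) > 0; (ii) for every α ∈ Ω, the map β ↦ g_β(x) f_α(ω_β) is integrable on (Δ, ν) and f_α(x) = ∫_Δ g_β(x) f_α(ω_β) dν(β); (iii) for every β ∈ Δ, the map α ↦ f_α(x) g_β(τ_α) is integrable on (Ω, μ) and g_β(x) = ∫_Ω f_α(x) g_β(τ_α) dμ(α). Then, in the extended nonnegative reals, μ({α ∈ Ω : f_α(x) ≠ 0})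 · ν({β ∈ Δ : g_β(x) ≠ 0}) ≥ 1/(A·B). -/
open MeasureTheory

theorem aux_one_side {𝕜 Ω Δ : Type*} [RCLike 𝕜]
    [MeasurableSpace Ω] [MeasurableSpace Δ] (μ : Measure Ω) (ν : Measure Δ)
    (u : Ω → 𝕜) (v : Δ → 𝕜) (k : Ω → Δ → 𝕜) (A : ℝ)
    (hk : ∀ α β, ‖k α β‖ ≤ A)
    (h : ∀ α, u α = ∫ β, v β * k α β ∂ν) :
    ∫⁻ α, ‖u α‖ₑ ∂μ ≤ (ENNReal.ofReal A * ∫⁻ β, ‖v β‖ₑ ∂ν) * μ {α | u α ≠ 0} := by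
  have hp : ∀ α, ‖u α‖ₑ ≤ ENNReal.ofReal A * ∫⁻ β, ‖v β‖ₑ ∂ν := by
    intro α
    rw [h α, ← lintegral_const_mul' _ _ ENNReal.ofReal_ne_top]
    refine (enorm_integral_le_lintegral_enorm _).trans (lintegral_mono fun β => ?_)
    rw [enorm_mul, mul_comm]
    gcongr
    rw [← ofReal_norm]
    exact ENNReal.ofReal_le_ofReal (hk α β)
  refine le_trans (lintegral_mono fun α => ?_)
    (lintegral_indicator_const_le {α | u α ≠ 0} (ENNReal.ofReal A * ∫⁻ β, ‖v β‖ₑ ∂ν))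
  by_cases hu : u α = 0
  · simp [hu]
  · simpa [Set.indicator, hu] using hp α

theorem aux_ne {𝕜 Ω : Type*} [RCLike 𝕜] [MeasurableSpace Ω] (μ : Measure Ω) (u : Ω → 𝕜)
    (hu : Integrable u μ) (hpos : 0 < ∫ α, ‖u α‖ ∂μ) :
    ∫⁻ α, ‖u α‖ₑ ∂μ ≠ 0 ∧ ∫⁻ α, ‖u α‖ₑ ∂μ ≠ ⊤ := by
  refine ⟨fun h0 => ?_, hu.2.ne⟩
  rw [integral_norm_eq_lintegral_enorm hu.1, h0] at hpos
  simp at hpos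

/-- **1-Unbounded Donoho-Stark-Elad-Bruckstein-Ricaud-Torrésani Uncertainty Principle.**
For unbounded continuous 1-Schauder frames `({f_α}, {τ_α})` and `({g_β}, {ω_β})` of a Banach
space `X`, applied at a fixed `x` in the intersection of the domains of the analysis operators,
`μ(supp θ_f x) · ν(supp θ_g x) ≥ 1/(A·B)` in `ℝ≥0∞`. -/
theorem unbounded_one_schauder_uncertainty
    {𝕜 X Ω Δ : Type*} [RCLike 𝕜]
    [NormedAddCommGroup X] [NormedSpace 𝕜 X] [CompleteSpace X]
    [MeasurableSpace Ω] [MeasurableSpace Δ]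
    (μ : Measure Ω) (ν : Measure Δ)
    (f : Ω → X →ₗ[𝕜] 𝕜) (g : Δ → X →ₗ[𝕜] 𝕜)
    (τ : Ω → X) (ω : Δ → X) (x : X)
    (A B : ℝ) (hA : 0 < A) (hB : 0 < B)
    (hfω : ∀ α β, ‖f α (ω β)‖ ≤ A)
    (hgτ : ∀ α β, ‖g β (τ α)‖ ≤ B)
    (hfint : Integrable (fun α => f α x) μ)
    (hfpos : 0 < ∫ α, ‖f α x‖ ∂μ)
    (hgint : Integrable (fun β => g β x) ν)
    (hgpos : 0 < ∫ β, ‖g β x‖ ∂ν)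
    (hrecf : ∀ α, Integrable (fun β => g β x * f α (ω β)) ν ∧
      f α x = ∫ β, g β x * f α (ω β) ∂ν)
    (hrecg : ∀ β, Integrable (fun α => f α x * g β (τ α)) μ ∧
      g β x = ∫ α, f α x * g β (τ α) ∂μ) :
    ENNReal.ofReal (1 / (A * B)) ≤ μ {α | f α x ≠ 0} * ν {β | g β x ≠ 0} := by
  obtain ⟨hF0, hFt⟩ := aux_ne μ _ hfint hfpos
  obtain ⟨hG0, hGt⟩ := aux_ne ν _ hgint hgpos
  have h1 := aux_one_side μ ν (fun α => f α x) (fun β => g β x) (fun α β => f α (ω β)) A hfω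
    (fun α => (hrecf α).2)
  have h2 := aux_one_side ν μ (fun β => g β x) (fun α => f α x) (fun β α => g β (τ α)) B
    (fun β α => hgτ α β) (fun β => (hrecg β).2)
  set F := ∫⁻ α, ‖f α x‖ₑ ∂μ
  set G := ∫⁻ β, ‖g β x‖ₑ ∂ν
  set m := μ {α | f α x ≠ 0}
  set n := ν {β | g β x ≠ 0}
  have h3 : (F * G) * 1 ≤ (F * G) * (ENNReal.ofReal (A * B) * (m * n)) := by
    rw [ENNReal.ofReal_mul hA.le]
    calc (F * G) * 1 = F * G := mul_one _
      _ ≤ _ := mul_le_mul' h1 h2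
      _ = _ := by ring
  have h4 := (ENNReal.mul_le_mul_iff_right (mul_ne_zero hF0 hG0)
    (ENNReal.mul_ne_top hFt hGt)).1 h3
  rw [one_div, ENNReal.ofReal_inv_of_pos (mul_pos hA hB)]
  rw [ENNReal.inv_le_iff_le_mul]
  · rwa [mul_comm] at h4 ⊢
  · intro _; simp; positivity
  · simp
end

section
/- Let (Ω, μ) and (Δ, ν) be measure spaces, let X be a Banach space over 𝕜, let {f_α}_{α∈Ω} be a family of (not necessarily bounded) linear functionals on X, and let {ω_β}_{β∈Δ} ⊆ X. Fix x ∈ X and a real constant A > 0 with |f_α(ω_β)| ≤ A for all α ∈ Ω, β ∈ Δ. Assume the map α ↦ f_α(x) is integrable on (Ω, μ), the map β ↦ g_β(x) is integrable on (Δ, ν), and for every α ∈ Ω the map β ↦ g_β(x) f_α(ω_β) is integrable on (Δ, ν) with f_α(x) = ∫_Δ g_β(x) f_α(ω_β) dν(β). Then ∫_Ω |f_α(x)| dμ(α) ≤ A · μ({α ∈ Ω : f_α(x) ≠ 0}) · ∫_Δ |g_β(x)| dν(β), where the right-hand side is interpreted in the extended nonnegative reals (the inequality holding trivially if μ({α :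 f_α(x) ≠ 0}) = ∞). -/
open MeasureTheory

/-- Inequality (FI): `∫ |f_α(x)| dμ ≤ A · μ(supp θ_f x) · ∫ |g_β(x)| dν`,
the right-hand side interpreted in the extended nonnegative reals. -/
theorem unbounded_one_schauder_FI
    {𝕜 X Ω Δ : Type*} [RCLike 𝕜]
    [NormedAddCommGroup X] [NormedSpace 𝕜 X] [CompleteSpace X]
    [MeasurableSpace Ω] [MeasurableSpace Δ]
    (μ : Measure Ω) (ν : Measure Δ)
    (f : Ω → X →ₗ[𝕜] 𝕜) (g : Δ → X →ₗ[𝕜] 𝕜)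
    (ω : Δ → X) (x : X)
    (A : ℝ) (hA : 0 < A)
    (hfω : ∀ α β, ‖f α (ω β)‖ ≤ A)
    (hfint : Integrable (fun α => f α x) μ)
    (hgint : Integrable (fun β => g β x) ν)
    (hrecf : ∀ α, Integrable (fun β => g β x * f α (ω β)) ν ∧
      f α x = ∫ β, g β x * f α (ω β) ∂ν) :
    ENNReal.ofReal (∫ α, ‖f α x‖ ∂μ) ≤
      ENNReal.ofReal A * μ {α | f α x ≠ 0} * ENNReal.ofReal (∫ β, ‖g β x‖ ∂ν) := by
  have hb : ∀ α, ‖f α x‖ ≤ A * ∫ β, ‖g β x‖ ∂ν := by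
    intro α
    rw [(hrecf α).2, ← integral_const_mul]
    refine norm_integral_le_of_norm_le (hgint.norm.const_mul A) (Filter.Eventually.of_forall ?_)
    intro β
    rw [norm_mul, mul_comm]
    exact mul_le_mul_of_nonneg_right (hfω α β) (norm_nonneg _)
  rw [ofReal_integral_norm_eq_lintegral_enorm hfint]
  calc ∫⁻ α, ‖f α x‖ₑ ∂μ
      ≤ ∫⁻ α, Set.indicator {α | f α x ≠ 0}
          (fun _ => ENNReal.ofReal (A * ∫ β, ‖g β x‖ ∂ν)) α ∂μ := by
        refine lintegral_mono fun α => ?_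
        by_cases h : f α x = 0
        · simp [h]
        · rw [Set.indicator_of_mem (by exact h), ← ofReal_norm_eq_enorm]
          exact ENNReal.ofReal_le_ofReal (hb α)
    _ ≤ ENNReal.ofReal (A * ∫ β, ‖g β x‖ ∂ν) * μ {α | f α x ≠ 0} :=
        lintegral_indicator_const_le _ _
    _ = _ := by
        rw [ENNReal.ofReal_mul hA.le, mul_right_comm]
end

section
/- Let X be a Banach space over 𝕜, let f_1, …, f_n and g_1, …, g_m be linear functionals on X, and let τ_1, …, τ_n ∈ X and ω_1, …, ω_m ∈ X satisfy x = Σ_{j=1}^n f_j(x) τ_j = Σ_{k=1}^m g_k(x) ω_k for all x ∈ X. Then for every x ∈ X with x ≠ 0, ‖θ_f x‖₀ · ‖θ_g x‖₀ ≥ 1 / ( (max_{1≤j≤n, 1≤k≤m} |f_j(ω_k)|) · (max_{1≤j≤n, 1≤k≤m} |g_k(τ_j)|) ), where ‖θ_f x‖₀ := #{j ∈ {1,…,n} : f_j(x) ≠ 0} and ‖θ_g x‖₀ := #{k ∈ {1,…,m} : g_k(x) ≠ 0}. -/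
theorem aux_bound {𝕜 X : Type*} [RCLike 𝕜] [NormedAddCommGroup X] [NormedSpace 𝕜 X]
    {m : ℕ} (φ : X →ₗ[𝕜] 𝕜) (g : Fin m → X →ₗ[𝕜] 𝕜) (ω : Fin m → X)
    (hg : ∀ x : X, x = ∑ k, g k x • ω k) (x : X) (M B : ℝ)
    (hM : ∀ k, ‖φ (ω k)‖ ≤ M) (hB : ∀ k, ‖g k x‖ ≤ B) :
    ‖φ x‖ ≤ (Nat.card {k : Fin m // g k x ≠ 0} : ℝ) * (B * M) := by
  classical
  have h1 : φ x = ∑ k, g k x * φ (ω k) := by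
    conv_lhs => rw [hg x]
    simp [map_sum]
  have h2 : φ x = ∑ k ∈ Finset.univ.filter (fun k => g k x ≠ 0), g k x * φ (ω k) := by
    rw [h1]
    symm
    apply Finset.sum_subset (Finset.filter_subset _ _)
    intro k _ hk
    have : g k x = 0 := by simpa using hk
    simp [this]
  rw [h2, Nat.card_eq_fintype_card, Fintype.card_subtype, ← nsmul_eq_mul]
  refine (norm_sum_le _ _).trans (Finset.sum_le_card_nsmul _ _ _ ?_)
  intro k _
  rw [norm_mul]
  exact mul_le_mul (hB k) (hM k) (norm_nonneg _) ((norm_nonneg _).trans (hB k))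

theorem aux_sup {n m : ℕ} (a : Fin n → Fin m → ℝ) (j : Fin n) (k : Fin m) :
    a j k ≤ ⨆ j, ⨆ k, a j k :=
  (le_ciSup (Set.finite_range (a j)).bddAbove k).trans
    (le_ciSup (f := fun j => ⨆ k, a j k) (Set.finite_range _).bddAbove j)

theorem aux_max {𝕜 X : Type*} [RCLike 𝕜] [NormedAddCommGroup X] [NormedSpace 𝕜 X]
    {m : ℕ} (g : Fin m → X →ₗ[𝕜] 𝕜) (ω : Fin m → X)
    (hg : ∀ x : X, x = ∑ k, g k x • ω k) (x : X) (hx : x ≠ 0) :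
    ∃ k₀, 0 < ‖g k₀ x‖ ∧ ∀ k, ‖g k x‖ ≤ ‖g k₀ x‖ := by
  have h : ∃ k, g k x ≠ 0 := by
    by_contra! h
    apply hx
    rw [hg x]
    simp [h]
  obtain ⟨k, hk⟩ := h
  haveI : Nonempty (Fin m) := ⟨k⟩
  obtain ⟨k₀, h₀⟩ := Finite.exists_max (fun k => ‖g k x‖)
  exact ⟨k₀, (norm_pos_iff.mpr hk).trans_le (h₀ k), h₀⟩

/-- Finite-dimensional corollary: for Schauder-frame-type expansions of the identity
`x = Σ f_j(x) τ_j = Σ g_k(x) ω_k` on a Banach space, for every nonzero `x`,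
`‖θ_f x‖₀ · ‖θ_g x‖₀ ≥ 1 / ((max |f_j(ω_k)|) · (max |g_k(τ_j)|))`. -/
theorem finite_schauder_frame_uncertainty
    {𝕜 X : Type*} [RCLike 𝕜]
    [NormedAddCommGroup X] [NormedSpace 𝕜 X] [CompleteSpace X]
    {n m : ℕ}
    (f : Fin n → X →ₗ[𝕜] 𝕜) (g : Fin m → X →ₗ[𝕜] 𝕜)
    (τ : Fin n → X) (ω : Fin m → X)
    (hf : ∀ x : X, x = ∑ j, f j x • τ j)
    (hg : ∀ x : X, x = ∑ k, g k x • ω k)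
    (x : X) (hx : x ≠ 0) :
    1 / ((⨆ j, ⨆ k, ‖f j (ω k)‖) * (⨆ j, ⨆ k, ‖g k (τ j)‖)) ≤
      (Nat.card {j : Fin n // f j x ≠ 0} : ℝ) *
        (Nat.card {k : Fin m // g k x ≠ 0} : ℝ) := by
  obtain ⟨j, hj, hj'⟩ := aux_max f τ hf x hx
  obtain ⟨k, hk, hk'⟩ := aux_max g ω hg x hx
  have h1 := aux_bound (f j) g ω hg x _ _
    (fun k => aux_sup (fun j k => ‖f j (ω k)‖) j k) hk'
  have h2 := aux_bound (g k) f τ hf x _ _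
    (fun j => aux_sup (fun j k => ‖g k (τ j)‖) j k) hj'
  have hM : 0 ≤ ⨆ j, ⨆ k, ‖f j (ω k)‖ :=
    Real.iSup_nonneg fun _ => Real.iSup_nonneg fun _ => norm_nonneg _
  have hN : 0 ≤ ⨆ j, ⨆ k, ‖g k (τ j)‖ :=
    Real.iSup_nonneg fun _ => Real.iSup_nonneg fun _ => norm_nonneg _
  beta_reduce at h1 h2
  generalize (⨆ j, ⨆ k, ‖f j (ω k)‖) = M at *
  generalize (⨆ j, ⨆ k, ‖g k (τ j)‖) = N at *
  have hp : (0:ℝ) ≤ (Nat.card {j : Fin n // f j x ≠ 0} : ℝ) := Nat.cast_nonneg _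
  have hq : (0:ℝ) ≤ (Nat.card {k : Fin m // g k x ≠ 0} : ℝ) := Nat.cast_nonneg _
  generalize (Nat.card {j : Fin n // f j x ≠ 0} : ℝ) = p at *
  generalize (Nat.card {k : Fin m // g k x ≠ 0} : ℝ) = q at *
  have h3 := mul_le_mul h1 h2 hk.le (hj.le.trans h1)
  have h4 : 1 ≤ p * q * (M * N) := by
    refine le_of_mul_le_mul_right ?_ (mul_pos hj hk)
    calc _ ≤ _ := (one_mul _).trans_le h3
      _ = _ := by ring
  exact div_le_of_le_mul₀ (mul_nonneg hM hN) (mul_nonneg hp hq) h4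
end

section
/- Let (Ω, μ) and (Δ, ν) be measure spaces, let X be a Banach space over 𝕜, let {f_α}_{α∈Ω} and {g_β}_{β∈Δ} be families of (not necessarily bounded) linear functionals on X, and let {τ_α}_{α∈Ω} ⊆ X and {ω_β}_{β∈Δ} ⊆ X. Fix x ∈ X and positive real constants A, B with |f_α(ω_β)| ≤ A and |g_β(τ_α)| ≤ B for all α ∈ Ω, β ∈ Δ. Assume: (i) sup_{α∈Ω} |f_α(x)| and sup_{β∈Δ} |g_β(x)| are finite and strictly positive; (ii) for every α ∈ Ω, the map β ↦ g_β(x) f_α(ω_β) is integrable on (Δ, ν) and f_α(x) = ∫_Δ g_β(x) f_α(ω_β) dν(β); (iii) for every β ∈ Δ, the map α ↦ f_α(x) g_β(τ_α) is integrable on (Ω, μ) and g_β(x) = ∫_Ω f_α(x) g_β(τ_α) dμ(α). Then, in the extended nonnegative reals, μ({α ∈ Ω : f_α(x) ≠ 0}) · ν({β ∈ Δ : g_β(x) ≠ 0}) ≥ 1/(A·B). -/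
open MeasureTheory ENNReal NNReal

theorem sup_le_aux {𝕜 Δ : Type*} [RCLike 𝕜] [MeasurableSpace Δ] (ν : Measure Δ)
    (u k : Δ → 𝕜) (A : ℝ) (hk : ∀ β, ‖k β‖ ≤ A) :
    (‖∫ β, u β * k β ∂ν‖₊ : ℝ≥0∞) ≤
      ENNReal.ofReal A * (⨆ β, (‖u β‖₊ : ℝ≥0∞)) * ν {β | u β ≠ 0} := by
  set S := {β | u β ≠ 0} with hS
  set c := ENNReal.ofReal A * (⨆ β, (‖u β‖₊ : ℝ≥0∞)) with hc
  have h1 : (‖∫ β, u β * k β ∂ν‖₊ : ℝ≥0∞) ≤ ∫⁻ β, ‖u β * k β‖ₑ ∂ν :=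
    enorm_integral_le_lintegral_enorm _
  refine h1.trans ?_
  calc ∫⁻ β, ‖u β * k β‖ₑ ∂ν
      ≤ ∫⁻ β, (toMeasurable ν S).indicator (fun _ => c) β ∂ν := by
        apply lintegral_mono
        intro β
        by_cases h : u β = 0
        · simp [h]
        · have hm : β ∈ toMeasurable ν S := subset_toMeasurable ν S h
          simp only [Set.indicator_of_mem hm]
          rw [enorm_mul, mul_comm, hc]
          refine mul_le_mul' ?_ (le_iSup (fun β => (‖u β‖₊ : ℝ≥0∞)) β)
          rw [← ofReal_norm]
          exact ENNReal.ofReal_le_ofReal (hk β)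
    _ = c * ν S := by
        rw [lintegral_indicator_const (measurableSet_toMeasurable ν S), measure_toMeasurable]

/-- **∞-Unbounded Donoho-Stark-Elad-Bruckstein-Ricaud-Torrésani Uncertainty Principle.**
For unbounded continuous ∞-Schauder frames `({f_α}, {τ_α})` and `({g_β}, {ω_β})` of a Banach
space `X`, applied at a fixed `x` in the intersection of the domains of the analysis operators,
`μ(supp θ_f x) · ν(supp θ_g x) ≥ 1/(A·B)` in `ℝ≥0∞`. -/
theorem unbounded_infty_schauder_uncertainty
    {𝕜 X Ω Δ : Type*} [RCLike 𝕜]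
    [NormedAddCommGroup X] [NormedSpace 𝕜 X] [CompleteSpace X]
    [MeasurableSpace Ω] [MeasurableSpace Δ]
    (μ : Measure Ω) (ν : Measure Δ)
    (f : Ω → X →ₗ[𝕜] 𝕜) (g : Δ → X →ₗ[𝕜] 𝕜)
    (τ : Ω → X) (ω : Δ → X) (x : X)
    (A B : ℝ) (hA : 0 < A) (hB : 0 < B)
    (hfω : ∀ α β, ‖f α (ω β)‖ ≤ A)
    (hgτ : ∀ α β, ‖g β (τ α)‖ ≤ B)
    (hfbdd : (⨆ α, (‖f α x‖₊ : ℝ≥0∞)) < ⊤)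
    (hfpos : 0 < ⨆ α, (‖f α x‖₊ : ℝ≥0∞))
    (hgbdd : (⨆ β, (‖g β x‖₊ : ℝ≥0∞)) < ⊤)
    (hgpos : 0 < ⨆ β, (‖g β x‖₊ : ℝ≥0∞))
    (hrecf : ∀ α, Integrable (fun β => g β x * f α (ω β)) ν ∧
      f α x = ∫ β, g β x * f α (ω β) ∂ν)
    (hrecg : ∀ β, Integrable (fun α => f α x * g β (τ α)) μ ∧
      g β x = ∫ α, f α x * g β (τ α) ∂μ) :
    ENNReal.ofReal (1 / (A * B)) ≤ μ {α | f α x ≠ 0} * ν {β | g β x ≠ 0} := by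
  set F := ⨆ α, (‖f α x‖₊ : ℝ≥0∞) with hF
  set G := ⨆ β, (‖g β x‖₊ : ℝ≥0∞) with hG
  set m := μ {α | f α x ≠ 0}
  set n := ν {β | g β x ≠ 0}
  have h1 : F ≤ ENNReal.ofReal A * G * n := by
    refine iSup_le fun α => ?_
    rw [(hrecf α).2]
    exact sup_le_aux ν (fun β => g β x) (fun β => f α (ω β)) A (fun β => hfω α β)
  have h2 : G ≤ ENNReal.ofReal B * F * m := by
    refine iSup_le fun β => ?_
    rw [(hrecg β).2]
    exact sup_le_aux μ (fun α => f α x) (fun α => g β (τ α)) B (fun α => hgτ α β)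
  have h3 : F * 1 ≤ F * (ENNReal.ofReal (A * B) * (m * n)) := by
    calc F * 1 = F := mul_one _
      _ ≤ ENNReal.ofReal A * G * n := h1
      _ ≤ ENNReal.ofReal A * (ENNReal.ofReal B * F * m) * n := by gcongr
      _ = _ := by rw [ENNReal.ofReal_mul hA.le]; ring
  have h4 := (ENNReal.mul_le_mul_iff_right hfpos.ne' hfbdd.ne).1 h3
  rw [one_div, ENNReal.ofReal_inv_of_pos (mul_pos hA hB)]
  exact (ENNReal.inv_le_iff_le_mul (fun _ => (ENNReal.ofReal_pos.2 (mul_pos hA hB)).ne') (fun h => absurd h ENNReal.ofReal_ne_top)).2 h4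
end
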